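/- Fix k ≥ 1, π ∈ (0,1], and Δ > 2^{2k+1} log(2) / π², and for each n ≥ k let m = ⌈Δ n⌉. Define the test ψ_σ on m-tuples V of k-flats of F_2^n by ψ_σ(V) = 1 iff σ(V) > ((1 − 2^{−k}) + π 2^{−(k+1)}) m. Then max( P_unif(ψ_σ = 1), P_{planted,π}(ψ_σ = 0) ) → 0 as n → ∞. -/

import Mathlib

open scoped BigOperators Classical
open Filter Topology

abbrev F2n (n : ℕ) := Fin n → ZMod 2

def IsFlat (n k : ℕ) (W : Set (F2n n)) : Prop :=
  ∃ A : AffineSubspace (ZMod 2) (F2n n),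
    (A : Set (F2n n)) = W ∧ W.Nonempty ∧ Module.finrank (ZMod 2) A.direction = n - k

def Flat (n k : ℕ) : Type := {W : Set (F2n n) // IsFlat n k W}

noncomputable instance (n k : ℕ) : Fintype (Flat n k) := by
  unfold Flat; exact Fintype.ofFinite _

noncomputable def q0 (n k : ℕ) : Flat n k → ℝ :=
  fun _ => (Fintype.card (Flat n k) : ℝ)⁻¹

noncomputable def qx (n k : ℕ) (x : F2n n) : Flat n k → ℝ :=
  fun W => if x ∈ W.1 then 0 else (Nat.card {W : Flat n k // x ∉ W.1} : ℝ)⁻¹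

noncomputable def prob {α : Type*} [Fintype α] (p : α → ℝ) (E : Set α) : ℝ :=
  ∑ a, if a ∈ E then p a else 0

noncomputable def expect {α : Type*} [Fintype α] (p : α → ℝ) (f : α → ℝ) : ℝ :=
  ∑ a, p a * f a

noncomputable def Punif (n k m : ℕ) : (Fin m → Flat n k) → ℝ :=
  fun V => ∏ j, q0 n k (V j)

noncomputable def Pplanted (n k m : ℕ) : (Fin m → Flat n k) → ℝ :=
  fun V => ((2:ℝ)^n)⁻¹ * ∑ x : F2n n, ∏ j, qx n k x (V j)

noncomputable def Z (n k m : ℕ) (V : Fin m → Flat n k) : ℕ :=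
  Nat.card {x : F2n n // ∀ j, x ∉ (V j).1}

noncomputable def satCount (n k m : ℕ) (V : Fin m → Flat n k) (x : F2n n) : ℕ :=
  Nat.card {j : Fin m // x ∉ (V j).1}

noncomputable def maxSat (n k m : ℕ) (V : Fin m → Flat n k) : ℕ :=
  Finset.univ.sup (fun x : F2n n => satCount n k m V x)

noncomputable def qxpi (n k : ℕ) (x : F2n n) (π : ℝ) : Flat n k → ℝ :=
  fun W => (1 - π) * q0 n k W + π * qx n k x W

noncomputable def Pplantedpi (n k m : ℕ) (π : ℝ) : (Fin m → Flat n k) → ℝ :=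
  fun V => ((2:ℝ)^n)⁻¹ * ∑ x : F2n n, ∏ j, qxpi n k x π (V j)

noncomputable def DeltaK (k : ℕ) : ℝ :=
  Real.log (1/2) / Real.log (1 - ((2:ℝ)^k)⁻¹)

/-!
Translations of `F_2^n` permute the `k`-flats, so every point lies on the same proportion of them,
which double counting of incidences identifies as `2^{-k}`. Hence for fixed `x` the count `s(V, x)`
is a sum of `m` independent indicators of mean `1 - 2^{-k}` under the uniform law and of mean
`1 - 2^{-k} + π 2^{-k}` under the law planted at `x`. The threshold sits halfway between the two, at
distance `ε = π 2^{-(k+1)}` from each, so Hoeffding's inequality bounds either deviation by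
`exp(-2ε²m)`. Under the planted law the hidden point alone certifies a large `σ(V)`; under the
uniform law a union bound over the `2^n` points costs a factor `2^n`, and `2^n exp(-2ε²m) → 0`
exactly because `2ε²Δ > log 2`.
-/

section Prob

variable {α : Type*} [Fintype α] {p : α → ℝ} {E F : Set α}

lemma prob_eq_sum_indicator (p : α → ℝ) (E : Set α) : prob p E = ∑ a, E.indicator p a := by
  simp only [prob, Set.indicator_apply]

lemma prob_eq_expect_indicator (p : α → ℝ) (E : Set α) : prob p E = expect p (E.indicator 1) := by
  simp only [prob, expect, Set.indicator_apply, Pi.one_apply, mul_ite, mul_one, mul_zero]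

lemma prob_nonneg (hp : ∀ a, 0 ≤ p a) (E : Set α) : 0 ≤ prob p E :=
  prob_eq_sum_indicator p E ▸ Finset.sum_nonneg fun a _ => Set.indicator_nonneg (fun b _ => hp b) a

lemma prob_mono (hp : ∀ a, 0 ≤ p a) (h : E ⊆ F) : prob p E ≤ prob p F := by
  simp only [prob_eq_sum_indicator]
  exact Finset.sum_le_sum fun a _ => Set.indicator_le_indicator_of_subset h hp a

lemma prob_iUnion_le {β : Type*} [Fintype β] (hp : ∀ a, 0 ≤ p a) (E : β → Set α) :
    prob p (⋃ x, E x) ≤ ∑ x, prob p (E x) := by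
  simp only [prob_eq_sum_indicator]
  rw [Finset.sum_comm]
  refine Finset.sum_le_sum fun a _ => ?_
  have hnonneg : ∀ x, 0 ≤ (E x).indicator p a := fun x => Set.indicator_nonneg (fun b _ => hp b) a
  refine Set.indicator_apply_le' (fun ha => ?_) fun _ => Finset.sum_nonneg fun x _ => hnonneg x
  obtain ⟨x, hx⟩ := Set.mem_iUnion.1 ha
  calc p a = (E x).indicator p a := (Set.indicator_of_mem hx p).symm
    _ ≤ ∑ y, (E y).indicator p a :=
      Finset.single_le_sum (fun y _ => hnonneg y) (Finset.mem_univ x)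

lemma prob_compl (hp : ∑ a, p a = 1) (E : Set α) : prob p Eᶜ = 1 - prob p E := by
  rw [eq_sub_iff_add_eq, ← hp]
  simp only [prob_eq_sum_indicator, ← Finset.sum_add_distrib, Set.indicator_compl_add_self_apply]

lemma nonempty_of_prob_ne_zero (h : prob p E ≠ 0) : E.Nonempty := by
  contrapose! h
  simp only [h, prob_eq_sum_indicator, Set.indicator_empty, Finset.sum_const_zero]

lemma prob_add (p q : α → ℝ) (E : Set α) : prob (p + q) E = prob p E + prob q E := by
  simp only [prob_eq_sum_indicator, Set.indicator_add', Pi.add_apply, Finset.sum_add_distrib]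

lemma prob_smul (c : ℝ) (p : α → ℝ) (E : Set α) : prob (c • p) E = c * prob p E := by
  simp only [prob_eq_sum_indicator, Finset.mul_sum]
  exact Finset.sum_congr rfl fun a _ => Set.indicator_const_smul_apply E c p a

lemma prob_sum {β : Type*} (s : Finset β) (p : β → α → ℝ) (E : Set α) :
    prob (∑ x ∈ s, p x) E = ∑ x ∈ s, prob (p x) E := by
  simp only [prob_eq_sum_indicator, Finset.indicator_sum, Finset.sum_apply]
  exact Finset.sum_comm

lemma sum_prob_setOf_eq_expect_card {β : Type*} [Fintype β] (p : α → ℝ) (R : β → α → Prop) :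
    ∑ x, prob p {a | R x a} = expect p fun a => (Nat.card {x // R x a} : ℝ) := by
  simp only [prob, expect, Set.mem_ofPred_eq]
  rw [Finset.sum_comm]
  refine Finset.sum_congr rfl fun a _ => ?_
  rw [← Finset.sum_filter, Finset.sum_const, nsmul_eq_mul, mul_comm, Nat.card_eq_fintype_card,
    Fintype.card_subtype]

end Prob

section Hoeffding

open MeasureTheory ProbabilityTheory

variable {α ι : Type*} [Fintype ι] {p : α → ℝ}

/-- The product weight `p^{⊗ι}` on `ι`-indexed samples, the law of independent draws from `p`. -/
def iidWeight (p : α → ℝ) (V : ι → α) : ℝ := ∏ i, p (V i)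

lemma iidWeight_nonneg (hp : ∀ a, 0 ≤ p a) (V : ι → α) : 0 ≤ iidWeight p V :=
  Finset.prod_nonneg fun i _ => hp (V i)

variable [Fintype α]

/-- A point of the standard simplex regarded as a `PMF`, which gives access to the
measure-theoretic probability library. -/
noncomputable def simplexPMF (hp : p ∈ stdSimplex ℝ α) : PMF α :=
  PMF.ofFintype (fun a => ENNReal.ofReal (p a)) <| by
    rw [← ENNReal.ofReal_sum_of_nonneg fun a _ => hp.1 a, hp.2, ENNReal.ofReal_one]

lemma toReal_simplexPMF (hp : p ∈ stdSimplex ℝ α) (a : α) : (simplexPMF hp a).toReal = p a :=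
  ENNReal.toReal_ofReal (hp.1 a)

lemma integral_simplexPMF [MeasurableSpace α] [MeasurableSingletonClass α]
    (hp : p ∈ stdSimplex ℝ α) (f : α → ℝ) :
    ∫ a, f a ∂(simplexPMF hp).toMeasure = expect p f := by
  simp only [PMF.integral_eq_sum, toReal_simplexPMF, smul_eq_mul, expect]

variable [DecidableEq ι]

lemma pi_simplexPMF_real [MeasurableSpace α] [MeasurableSingletonClass α]
    (hp : p ∈ stdSimplex ℝ α) (E : Set (ι → α)) :
    (Measure.pi fun _ : ι => (simplexPMF hp).toMeasure).real E = prob (iidWeight p) E := by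
  have hE : E = ({V | V ∈ E} : Finset (ι → α)) := by simp
  rw [prob, ← Finset.sum_filter, hE, ← sum_measureReal_singleton]
  simp only [← hE]
  refine Finset.sum_congr rfl fun V _ => ?_
  simp only [measureReal_def, Measure.pi_singleton, ENNReal.toReal_prod, iidWeight,
    PMF.toMeasure_apply_singleton _ _ (measurableSet_singleton _), toReal_simplexPMF]

-- For `a = b` the right-hand side is `exp 0 = 1`, by the convention `x / 0 = 0`.
theorem prob_iidWeight_expect_add_mul_le_sum_le (hp : p ∈ stdSimplex ℝ α) {f : α → ℝ} {a b : ℝ}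
    (hf : ∀ x, f x ∈ Set.Icc a b) {ε : ℝ} (hε : 0 ≤ ε) :
    prob (iidWeight p) {V : ι → α | (expect p f + ε) * Fintype.card ι ≤ ∑ i, f (V i)}
      ≤ Real.exp (-(2 * ε ^ 2 * Fintype.card ι / (b - a) ^ 2)) := by
  let _ : MeasurableSpace α := ⊤
  set μ := (simplexPMF hp).toMeasure
  have hμ : IsProbabilityMeasure μ := inferInstance
  let X : ι → (ι → α) → ℝ := fun i V => f (V i) - μ[f]
  have hindep : iIndepFun X (Measure.pi fun _ => μ) :=
    iIndepFun_pi (X := fun _ a => f a - μ[f]) fun _ => (measurable_of_finite _).aemeasurable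
  have hsubG (i : ι) : HasSubgaussianMGF (X i) ((‖b - a‖₊ / 2) ^ 2) (Measure.pi fun _ => μ) := by
    have h := hasSubgaussianMGF_of_mem_Icc (μ := Measure.pi fun _ : ι => μ)
      (X := fun V => f (V i)) (measurable_of_finite _).aemeasurable (ae_of_all _ fun V => hf (V i))
    rwa [integral_comp_eval (μ := fun _ : ι => μ) (i := i)
      (measurable_of_finite f).aestronglyMeasurable] at h
  have hHoeffding := HasSubgaussianMGF.measure_sum_ge_le_of_iIndepFun hindep
    (s := Finset.univ) (fun i _ => hsubG i) (ε := ε * Fintype.card ι) (by positivity)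
  have hevent : {V : ι → α | (expect p f + ε) * Fintype.card ι ≤ ∑ i, f (V i)}
      = {V | ε * Fintype.card ι ≤ ∑ i, X i V} := by
    ext V
    simp only [X, μ, integral_simplexPMF, Set.mem_ofPred_eq, Finset.sum_sub_distrib,
      Finset.sum_const, Finset.card_univ, nsmul_eq_mul, le_sub_iff_add_le]
    ring_nf
  rw [hevent, ← pi_simplexPMF_real hp]
  refine hHoeffding.trans_eq (congrArg Real.exp ?_)
  have hvar : ((∑ _i : ι, (‖b - a‖₊ / 2) ^ 2 : NNReal) : ℝ)
      = Fintype.card ι * ((b - a) / 2) ^ 2 := by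
    simp [div_pow]
  rw [hvar]
  obtain hι | hι := eq_or_ne (Fintype.card ι : ℝ) 0
  · simp [hι]
  · field_simp

theorem prob_iidWeight_add_mul_le_card_le (hp : p ∈ stdSimplex ℝ α) (A : Set α) {ε : ℝ}
    (hε : 0 ≤ ε) :
    prob (iidWeight p)
        {V : ι → α | (prob p A + ε) * Fintype.card ι ≤ (Nat.card {i // V i ∈ A} : ℝ)}
      ≤ Real.exp (-(2 * ε ^ 2 * Fintype.card ι)) := by
  have hA (a : α) : A.indicator (1 : α → ℝ) a ∈ Set.Icc 0 1 := by
    by_cases ha : a ∈ A <;> simp [ha]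
  have hcard (V : ι → α) : (Nat.card {i // V i ∈ A} : ℝ) = ∑ i, A.indicator 1 (V i) := by
    simp [Nat.card_eq_fintype_card, Fintype.card_subtype, Set.indicator_apply]
  simpa only [prob_eq_expect_indicator, hcard, sub_zero, one_pow, div_one] using
    prob_iidWeight_expect_add_mul_le_sum_le (ι := ι) hp hA hε

theorem prob_iidWeight_card_le_sub_mul_le (hp : p ∈ stdSimplex ℝ α) (A : Set α) {ε : ℝ}
    (hε : 0 ≤ ε) :
    prob (iidWeight p)
        {V : ι → α | (Nat.card {i // V i ∈ A} : ℝ) ≤ (prob p A - ε) * Fintype.card ι}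
      ≤ Real.exp (-(2 * ε ^ 2 * Fintype.card ι)) := by
  have hcard (V : ι → α) :
      (Nat.card {i // V i ∈ A} : ℝ) + Nat.card {i // V i ∈ Aᶜ} = Fintype.card ι := by
    rw [← Nat.card_eq_fintype_card, ← Nat.card_congr (Equiv.sumCompl (V · ∈ A)), Nat.card_sum,
      Nat.cast_add]
    rfl
  refine (prob_mono (iidWeight_nonneg hp.1) fun V hV => ?_).trans
    (prob_iidWeight_add_mul_le_card_le hp Aᶜ hε)
  simp only [Set.mem_ofPred_eq, prob_compl hp.2] at hV ⊢
  linarith [hcard V]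

end Hoeffding

section Flats

open scoped Pointwise

variable {n k : ℕ}

lemma IsFlat.vadd {W : Set (F2n n)} (hW : IsFlat n k W) (v : F2n n) : IsFlat n k (v +ᵥ W) := by
  obtain ⟨A, rfl, hne, hdim⟩ := hW
  exact ⟨v +ᵥ A, AffineSubspace.coe_pointwise_vadd v A, hne.vadd_set,
    by rwa [AffineSubspace.pointwise_vadd_direction]⟩

lemma isFlat_vadd_iff {W : Set (F2n n)} (v : F2n n) : IsFlat n k (v +ᵥ W) ↔ IsFlat n k W :=
  ⟨fun h => by simpa only [neg_vadd_vadd] using h.vadd (-v), fun h => h.vadd v⟩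

lemma IsFlat.natCard {W : Set (F2n n)} (hW : IsFlat n k W) : Nat.card W = 2 ^ (n - k) := by
  obtain ⟨A, rfl, hne, hdim⟩ := hW
  have : Nonempty A := hne.to_subtype
  calc Nat.card A = Nat.card A.direction :=
        (Nat.card_congr (Equiv.vaddConst (Classical.arbitrary A))).symm
    _ = 2 ^ (n - k) := by
        rw [Module.natCard_eq_pow_finrank (K := ZMod 2), hdim, Nat.card_zmod]

lemma exists_submodule_finrank_eq {R M : Type*} [Ring R] [StrongRankCondition R] [AddCommGroup M]
    [Module R M] {d : ℕ} (hd : d ≤ Module.finrank R M) :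
    ∃ S : Submodule R M, Module.finrank R S = d := by
  obtain ⟨s, hcard, hs⟩ := exists_finset_linearIndependent_of_le_finrank hd
  exact ⟨Submodule.span R s, hcard ▸ finrank_span_finset_eq_card hs⟩

namespace Flat

instance : Nonempty (Flat n k) := by
  obtain ⟨S, hS⟩ := exists_submodule_finrank_eq (R := ZMod 2) (M := F2n n) (d := n - k) (by simp)
  exact ⟨⟨S, S.toAffineSubspace, rfl, ⟨0, S.zero_mem⟩, by
    rw [Submodule.toAffineSubspace_direction, hS]⟩⟩

/-- Translation by `v` as a permutation of the `k`-flats. It is used to see that all points lie on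
equally many flats. -/
def translate (v : F2n n) : Equiv.Perm (Flat n k) :=
  (AddAction.toPerm v : Equiv.Perm (Set (F2n n))).subtypeEquiv fun _ => (isFlat_vadd_iff v).symm

lemma vadd_mem_translate_iff (v x : F2n n) (W : Flat n k) :
    v + x ∈ (translate v W).1 ↔ x ∈ W.1 :=
  Set.vadd_mem_vadd_set_iff

/-- The flats that miss `x`, that is, the constraints satisfied by the assignment `x`. -/
def avoiding (n k : ℕ) (x : F2n n) : Set (Flat n k) := {W | x ∉ W.1}

end Flat

open Flat

lemma q0_mem_stdSimplex (n k : ℕ) : q0 n k ∈ stdSimplex ℝ (Flat n k) :=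
  ⟨fun _ => by unfold q0; positivity, by simp [q0]⟩

lemma prob_q0_mem_eq (n k : ℕ) (x y : F2n n) :
    prob (q0 n k) {W | x ∈ W.1} = prob (q0 n k) {W | y ∈ W.1} := by
  refine Fintype.sum_equiv (translate (y - x)) _ _ fun W => if_congr ?_ rfl rfl
  have h := vadd_mem_translate_iff (y - x) x W
  rw [sub_add_cancel] at h
  exact h.symm

lemma prob_q0_mem (hkn : k ≤ n) (x : F2n n) : prob (q0 n k) {W | x ∈ W.1} = ((2 : ℝ) ^ k)⁻¹ := by
  have hcount : (2 : ℝ) ^ n * prob (q0 n k) {W | x ∈ W.1} = 2 ^ (n - k) :=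
    calc (2 : ℝ) ^ n * prob (q0 n k) {W | x ∈ W.1}
        = ∑ y : F2n n, prob (q0 n k) {W | y ∈ W.1} := by
          simp [prob_q0_mem_eq n k _ x]
      _ = expect (q0 n k) fun W => (Nat.card W.1 : ℝ) :=
          sum_prob_setOf_eq_expect_card _ fun (y : F2n n) (W : Flat n k) => y ∈ W.1
      _ = 2 ^ (n - k) := by
          simp only [expect, fun W : Flat n k => W.2.natCard, ← Finset.sum_mul,
            (q0_mem_stdSimplex n k).2, one_mul, Nat.cast_pow, Nat.cast_ofNat]
  rw [pow_sub₀ _ two_ne_zero hkn] at hcount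
  exact mul_left_cancel₀ (by positivity) hcount

lemma prob_q0_avoiding (hkn : k ≤ n) (x : F2n n) :
    prob (q0 n k) (avoiding n k x) = 1 - ((2 : ℝ) ^ k)⁻¹ := by
  rw [← prob_q0_mem hkn x, ← prob_compl (q0_mem_stdSimplex n k).2]
  rfl

lemma avoiding_nonempty (hk : 1 ≤ k) (hkn : k ≤ n) (x : F2n n) : (avoiding n k x).Nonempty := by
  have hlt : ((2 : ℝ) ^ k)⁻¹ < 1 :=
    inv_lt_one_of_one_lt₀ (one_lt_pow₀ one_lt_two (Nat.one_le_iff_ne_zero.1 hk))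
  refine nonempty_of_prob_ne_zero (p := q0 n k) ?_
  rw [prob_q0_avoiding hkn]
  exact (sub_pos.2 hlt).ne'

lemma prob_qx_avoiding (hk : 1 ≤ k) (hkn : k ≤ n) (x : F2n n) :
    prob (qx n k x) (avoiding n k x) = 1 := by
  have : Nonempty {W : Flat n k // x ∉ W.1} := (avoiding_nonempty hk hkn x).to_subtype
  calc prob (qx n k x) (avoiding n k x)
      = ∑ W : Flat n k, if x ∉ W.1 then (Nat.card {W : Flat n k // x ∉ W.1} : ℝ)⁻¹ else 0 :=
        Finset.sum_congr rfl fun W _ => by by_cases hx : x ∈ W.1 <;> simp [qx, avoiding, hx]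
    _ = 1 := by
        rw [← Finset.sum_filter, Finset.sum_const, nsmul_eq_mul, ← Fintype.card_subtype,
          ← Nat.card_eq_fintype_card, mul_inv_cancel₀ (Nat.cast_ne_zero.2 Nat.card_pos.ne')]

lemma qx_mem_stdSimplex (hk : 1 ≤ k) (hkn : k ≤ n) (x : F2n n) :
    qx n k x ∈ stdSimplex ℝ (Flat n k) := by
  refine ⟨fun W => by unfold qx; positivity, ?_⟩
  rw [← prob_qx_avoiding hk hkn x, prob_eq_sum_indicator]
  refine Finset.sum_congr rfl fun W _ => ?_
  by_cases hx : x ∈ W.1 <;> simp [qx, avoiding, hx]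

end Flats

section Test

open Flat

variable {n k m : ℕ} {π ε : ℝ}

lemma lt_maxSat_iff (V : Fin m → Flat n k) (t : ℝ) :
    t < maxSat n k m V ↔ ∃ x, t < satCount n k m V x := by
  obtain ⟨x, -, hx⟩ := Finset.exists_mem_eq_sup Finset.univ Finset.univ_nonempty
    (satCount n k m V)
  refine ⟨fun h => ⟨x, by rwa [← hx]⟩, fun ⟨y, hy⟩ => hy.trans_le ?_⟩
  exact_mod_cast Finset.le_sup (f := satCount n k m V) (Finset.mem_univ y)

lemma qxpi_eq (n k : ℕ) (x : F2n n) (π : ℝ) :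
    qxpi n k x π = (1 - π) • q0 n k + π • qx n k x := rfl

lemma qxpi_mem_stdSimplex (hk : 1 ≤ k) (hkn : k ≤ n) (hπ0 : 0 ≤ π) (hπ1 : π ≤ 1) (x : F2n n) :
    qxpi n k x π ∈ stdSimplex ℝ (Flat n k) :=
  convex_stdSimplex ℝ _ (q0_mem_stdSimplex n k) (qx_mem_stdSimplex hk hkn x)
    (sub_nonneg.2 hπ1) hπ0 (sub_add_cancel 1 π)

lemma prob_qxpi_avoiding (hk : 1 ≤ k) (hkn : k ≤ n) (x : F2n n) (π : ℝ) :
    prob (qxpi n k x π) (avoiding n k x) = 1 - ((2 : ℝ) ^ k)⁻¹ + π * ((2 : ℝ) ^ k)⁻¹ := by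
  rw [qxpi_eq, prob_add, prob_smul, prob_smul, prob_q0_avoiding hkn, prob_qx_avoiding hk hkn]
  ring

lemma prob_Pplantedpi (n k m : ℕ) (π : ℝ) (E : Set (Fin m → Flat n k)) :
    prob (Pplantedpi n k m π) E
      = ((2 : ℝ) ^ n)⁻¹ * ∑ x : F2n n, prob (iidWeight (qxpi n k x π)) E := by
  rw [← prob_sum, ← prob_smul]
  congr 1
  ext V
  simp only [Pplantedpi, iidWeight, Pi.smul_apply, Finset.sum_apply, smul_eq_mul]

theorem prob_Punif_lt_maxSat_le (hkn : k ≤ n) (hε : 0 ≤ ε) :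
    prob (Punif n k m) {V | (1 - ((2 : ℝ) ^ k)⁻¹ + ε) * m < maxSat n k m V}
      ≤ 2 ^ n * Real.exp (-(2 * ε ^ 2 * m)) := by
  let E (x : F2n n) : Set (Fin m → Flat n k) :=
    {V | (1 - ((2 : ℝ) ^ k)⁻¹ + ε) * m ≤ satCount n k m V x}
  have hnonneg : ∀ V, 0 ≤ Punif n k m V := iidWeight_nonneg (q0_mem_stdSimplex n k).1
  have hE (x : F2n n) : prob (Punif n k m) (E x) ≤ Real.exp (-(2 * ε ^ 2 * m)) := by
    have hHoeffding := prob_iidWeight_add_mul_le_card_le (ι := Fin m) (q0_mem_stdSimplex n k)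
      (avoiding n k x) hε
    rwa [prob_q0_avoiding hkn, Fintype.card_fin] at hHoeffding
  calc prob (Punif n k m) {V | (1 - ((2 : ℝ) ^ k)⁻¹ + ε) * m < maxSat n k m V}
      ≤ prob (Punif n k m) (⋃ x, E x) := prob_mono hnonneg fun V hV =>
        Set.mem_iUnion.2 (((lt_maxSat_iff V _).1 hV).imp fun _ => le_of_lt)
    _ ≤ ∑ x, prob (Punif n k m) (E x) := prob_iUnion_le hnonneg E
    _ ≤ ∑ _x : F2n n, Real.exp (-(2 * ε ^ 2 * m)) := Finset.sum_le_sum fun x _ => hE x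
    _ = 2 ^ n * Real.exp (-(2 * ε ^ 2 * m)) := by simp

theorem prob_Pplantedpi_not_lt_maxSat_le (hk : 1 ≤ k) (hkn : k ≤ n) (hπ0 : 0 ≤ π) (hπ1 : π ≤ 1)
    (hε : 0 ≤ ε) :
    prob (Pplantedpi n k m π)
        {V | ¬ (1 - ((2 : ℝ) ^ k)⁻¹ + π * ((2 : ℝ) ^ k)⁻¹ - ε) * m < maxSat n k m V}
      ≤ Real.exp (-(2 * ε ^ 2 * m)) := by
  set E : Set (Fin m → Flat n k) :=
    {V | ¬ (1 - ((2 : ℝ) ^ k)⁻¹ + π * ((2 : ℝ) ^ k)⁻¹ - ε) * m < maxSat n k m V}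
  have hE (x : F2n n) : prob (iidWeight (qxpi n k x π)) E ≤ Real.exp (-(2 * ε ^ 2 * m)) := by
    have hq := qxpi_mem_stdSimplex hk hkn hπ0 hπ1 x
    have hHoeffding := prob_iidWeight_card_le_sub_mul_le (ι := Fin m) hq (avoiding n k x) hε
    rw [prob_qxpi_avoiding hk hkn, Fintype.card_fin] at hHoeffding
    refine (prob_mono (iidWeight_nonneg hq.1) fun V hV => ?_).trans hHoeffding
    exact not_lt.1 fun hlt => hV ((lt_maxSat_iff V _).2 ⟨x, hlt⟩)
  calc prob (Pplantedpi n k m π) E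
      = ((2 : ℝ) ^ n)⁻¹ * ∑ x : F2n n, prob (iidWeight (qxpi n k x π)) E := prob_Pplantedpi ..
    _ ≤ ((2 : ℝ) ^ n)⁻¹ * ∑ _x : F2n n, Real.exp (-(2 * ε ^ 2 * m)) := by
        gcongr with x
        exact hE x
    _ = Real.exp (-(2 * ε ^ 2 * m)) := by simp

end Test

lemma tendsto_pow_mul_exp_neg_mul_ceil {a c Δ : ℝ} (ha : 0 < a) (hc : 0 ≤ c)
    (h : Real.log a < c * Δ) :
    Tendsto (fun n : ℕ => a ^ n * Real.exp (-(c * ⌈Δ * n⌉₊))) atTop (𝓝 0) := by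
  have hlim : Tendsto (fun n : ℕ => Real.exp (-((c * Δ - Real.log a) * n))) atTop (𝓝 0) :=
    Real.tendsto_exp_neg_atTop_nhds_zero.comp <|
      tendsto_natCast_atTop_atTop.const_mul_atTop (sub_pos.2 h)
  refine squeeze_zero (fun n => by positivity) (fun n => ?_) hlim
  calc a ^ n * Real.exp (-(c * ⌈Δ * n⌉₊))
      ≤ a ^ n * Real.exp (-(c * (Δ * n))) := by gcongr; exact Nat.le_ceil _
    _ = Real.exp (-((c * Δ - Real.log a) * n)) := by
        rw [← Real.exp_log ha, ← Real.exp_nat_mul, ← Real.exp_add, Real.exp_log ha]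
        ring_nf

theorem stmt17 (k : ℕ) (hk : 1 ≤ k) (π : ℝ) (hπ0 : 0 < π) (hπ1 : π ≤ 1)
    (Δ : ℝ) (hΔ : (2:ℝ)^(2*k+1) * Real.log 2 / π^2 < Δ) :
    Tendsto (fun n : ℕ =>
        max (prob (Punif n k ⌈Δ * (n:ℝ)⌉₊)
              {V | ((1 - ((2:ℝ)^k)⁻¹) + π * ((2:ℝ)^(k+1))⁻¹) * (⌈Δ * (n:ℝ)⌉₊ : ℝ)
                    < (maxSat n k ⌈Δ * (n:ℝ)⌉₊ V : ℝ)})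
            (prob (Pplantedpi n k ⌈Δ * (n:ℝ)⌉₊ π)
              {V | ¬ ((1 - ((2:ℝ)^k)⁻¹) + π * ((2:ℝ)^(k+1))⁻¹) * (⌈Δ * (n:ℝ)⌉₊ : ℝ)
                    < (maxSat n k ⌈Δ * (n:ℝ)⌉₊ V : ℝ)}))
      atTop (nhds 0) := by
  set ε := π * ((2 : ℝ) ^ (k + 1))⁻¹ with hε
  have hε0 : 0 ≤ ε := by positivity
  have hlog : Real.log 2 < 2 * ε ^ 2 * Δ := by
    calc Real.log 2 < Δ * π ^ 2 / 2 ^ (2 * k + 1) := by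
          rwa [lt_div_iff₀' (by positivity), ← div_lt_iff₀ (by positivity)]
      _ = 2 * ε ^ 2 * Δ := by rw [hε]; field_simp; ring
  have hthreshold : 1 - ((2 : ℝ) ^ k)⁻¹ + ε = 1 - ((2 : ℝ) ^ k)⁻¹ + π * ((2 : ℝ) ^ k)⁻¹ - ε := by
    rw [hε, pow_succ]; ring
  refine squeeze_zero' (Eventually.of_forall fun n => ?_) ?_
    (tendsto_pow_mul_exp_neg_mul_ceil two_pos (by positivity) hlog)
  · exact le_max_of_le_left (prob_nonneg (iidWeight_nonneg (q0_mem_stdSimplex n k).1) _)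
  · filter_upwards [eventually_ge_atTop k] with n hkn
    refine max_le (prob_Punif_lt_maxSat_le hkn hε0) ?_
    rw [hthreshold]
    refine (prob_Pplantedpi_not_lt_maxSat_le hk hkn hπ0.le hπ1 hε0).trans ?_
    exact le_mul_of_one_le_left (Real.exp_nonneg _) (one_le_pow₀ one_le_two)
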